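/- Let F : H → ℝ be a convex, coercive, differentiable function on a real Hilbert space H with nonempty set of minimizers X* which is second order regular, and minimum F*. Assume F satisfies the local quadratic growth condition G²_{μ,loc} for some μ > 0: there exists ε > 0 such that (μ/2)·d(x,X*)² ≤ F(x) − F* whenever d(x,X*) ≤ ε. Let α > 3 and let x : [t₀, ∞) → H be a twice differentiable solution of ẍ(t) + (α/t)·ẋ(t) + ∇F(x(t)) = 0, with t₀ ≥ 0. If μ is small enough, then F(x(t)) − F* = O(t^{−2α/3}) and ‖ẋ(t)‖ = O(t^{−α/3}) as t → ∞, and the trajectory x(·) converges strongly to a minimizer of F. -/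

import Mathlib

open Filter Metric Topology Asymptotics

/-- The inner second order tangent set to `S` at `xb` in the direction `dir`:
`T²_S(x̄,h) = {w : d(x̄ + t h + ½ t² w, S) = o(t²) as t ↓ 0}`. -/
def innerSecondOrderTangentSet {H : Type*} [NormedAddCommGroup H] [InnerProductSpace ℝ H]
    (S : Set H) (xb dir : H) : Set H :=
  {w : H |
    (fun t : ℝ => Metric.infDist (xb + t • dir + (t ^ 2 / 2) • w) S)
      =o[nhdsWithin (0 : ℝ) (Set.Ioi 0)] fun t : ℝ => t ^ 2}

/-- `S` is second order regular at `x̄ ∈ S` if for every direction `h` and every sequence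
`xₙ = x̄ + tₙ h + ½ tₙ² rₙ` in `S` with `tₙ` monotonically non-increasing to `0` and
`tₙ rₙ → 0`, one has `d(rₙ, T²_S(x̄,h)) → 0`. -/
def SecondOrderRegularAt {H : Type*} [NormedAddCommGroup H] [InnerProductSpace ℝ H]
    (S : Set H) (xb : H) : Prop :=
  ∀ (dir : H) (t : ℕ → ℝ) (r : ℕ → H),
    (∀ n : ℕ, xb + t n • dir + ((t n) ^ 2 / 2) • r n ∈ S) →
    Antitone t → (∀ n : ℕ, 0 < t n) → Tendsto t atTop (𝓝 (0 : ℝ)) →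
    Tendsto (fun n : ℕ => t n • r n) atTop (𝓝 (0 : H)) →
    Tendsto (fun n : ℕ => Metric.infDist (r n) (innerSecondOrderTangentSet S xb dir))
      atTop (𝓝 (0 : ℝ))

/-- `S` is second order regular if it is second order regular at every point of `S`. -/
def SecondOrderRegular {H : Type*} [NormedAddCommGroup H] [InnerProductSpace ℝ H]
    (S : Set H) : Prop :=
  ∀ xb ∈ S, SecondOrderRegularAt S xb

/-!
Let `K` be the set of minimizers and `m` the minimum. The Lyapunov energy is
`t² (F(x) - m) + b² d(u, K)² / 2` with `u = x + (t / b) ẋ`; it is differentiable because half the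
squared distance to a closed convex set has gradient `u - p` at `u`, where `p` is the projection of
`u`. Anchored at a single minimizer and with `b = α - 1`, it is nonincreasing, so `F(x(t)) → m` and
the growth condition eventually holds along the trajectory. For `b = 2 α / 3`, the obtuse angle
property of projections gives `⟪u - p, x - p⟫ ≤ d(u, K) d(x, K)`, and quadratic growth bounds
`t d(u, K) d(x, K)` by a multiple of the energy `E`. Hence `E' ≤ (C / t² - (b - 2) / t) E`, so
`E = O(t^{-(b - 2)})` and `F(x) - m = O(t^{-2α/3})`. Dissipation of the mechanical energy turns this
into `‖ẋ‖ = O(t^{-α/3})`, which is integrable since `α > 3`.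
-/

open scoped InnerProductSpace

section ScalarComparison

lemma isBoundedUnder_le_of_eventually_hasDerivAt_nonpos {f f' : ℝ → ℝ}
    (hf : ∀ᶠ t in atTop, HasDerivAt f (f' t) t) (hf' : ∀ᶠ t in atTop, f' t ≤ 0) :
    IsBoundedUnder (· ≤ ·) atTop f := by
  obtain ⟨T, hT⟩ := eventually_atTop.1 (hf.and hf')
  have hanti : AntitoneOn f (Set.Ici T) :=
    antitoneOn_of_hasDerivWithinAt_nonpos (convex_Ici T)
      (fun t ht => (hT t ht).1.continuousAt.continuousWithinAt)
      (fun t ht => (hT t (interior_subset ht)).1.hasDerivWithinAt)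
      (fun t ht => (hT t (interior_subset ht)).2)
  refine ⟨f T, eventually_map.2 ?_⟩
  filter_upwards [eventually_ge_atTop T] with t ht
  exact hanti Set.self_mem_Ici ht ht

lemma isBigO_rpow_neg_of_rpow_mul_le {f : ℝ → ℝ} {r M : ℝ} (hf : ∀ᶠ t in atTop, 0 ≤ f t)
    (hM : ∀ᶠ t in atTop, t ^ r * f t ≤ M) : f =O[atTop] fun t => t ^ (-r) := by
  refine IsBigO.of_bound M ?_
  filter_upwards [hf, hM, eventually_gt_atTop 0] with t hft hMt ht
  rw [Real.norm_of_nonneg hft, Real.norm_of_nonneg (Real.rpow_nonneg ht.le _), Real.rpow_neg ht.le,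
    ← div_eq_mul_inv, le_div_iff₀ (Real.rpow_pos_of_pos ht _), mul_comm]
  exact hMt

lemma isBigO_rpow_neg_of_hasDerivAt_le_mul {E D : ℝ → ℝ} {r C : ℝ}
    (hE₀ : ∀ᶠ t in atTop, 0 ≤ E t) (hE : ∀ᶠ t in atTop, HasDerivAt E (D t) t)
    (hD : ∀ᶠ t in atTop, D t ≤ (C / t ^ 2 - r / t) * E t) :
    E =O[atTop] fun t => t ^ (-r) := by
  -- `t ^ r * exp (C / t)` is an integrating factor, equivalent to `t ^ r` at infinity.
  have hderiv : ∀ᶠ t in atTop, HasDerivAt (fun s => s ^ r * Real.exp (C / s) * E s)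
      (t ^ r * Real.exp (C / t) * (D t - (C / t ^ 2 - r / t) * E t)) t := by
    filter_upwards [hE, eventually_gt_atTop 0] with t hEt ht
    have hpow := Real.hasDerivAt_rpow_const (p := r) (Or.inl ht.ne')
    have hexp := ((hasDerivAt_inv ht.ne').const_mul C).exp
    refine ((hpow.mul hexp).mul hEt).congr_deriv ?_
    rw [Real.rpow_sub_one ht.ne']
    simp only [Pi.mul_apply, div_eq_mul_inv]
    field_simp
    ring
  obtain ⟨M, hM⟩ := isBoundedUnder_le_of_eventually_hasDerivAt_nonpos hderiv <| by
    filter_upwards [hD, eventually_gt_atTop 0] with t hDt ht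
    exact mul_nonpos_of_nonneg_of_nonpos (by positivity) (sub_nonpos.2 hDt)
  have hexp : ∀ᶠ t in atTop, 1 / 2 ≤ Real.exp (C / t) := by
    have hlim : Tendsto (fun t : ℝ => Real.exp (C / t)) atTop (𝓝 1) := by
      rw [← Real.exp_zero]
      exact (Real.continuous_exp.tendsto 0).comp (tendsto_const_nhds.div_atTop tendsto_id)
    exact hlim.eventually (eventually_ge_nhds (by norm_num))
  refine isBigO_rpow_neg_of_rpow_mul_le (M := 2 * M) hE₀ ?_
  filter_upwards [eventually_map.1 hM, hexp, hE₀, eventually_gt_atTop 0] with t hMt hexpt hEt ht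
  have hnonneg : 0 ≤ t ^ r * E t := mul_nonneg (Real.rpow_nonneg ht.le r) hEt
  linarith [mul_le_mul_of_nonneg_right hexpt hnonneg]

lemma isBigO_rpow_neg_of_hasDerivAt_le_add {W D : ℝ → ℝ} {r s C : ℝ} (hrs : r < s)
    (hW₀ : ∀ᶠ t in atTop, 0 ≤ W t) (hW : ∀ᶠ t in atTop, HasDerivAt W (D t) t)
    (hD : ∀ᶠ t in atTop, D t ≤ C * t ^ (-r) / t - s / t * W t) :
    W =O[atTop] fun t => t ^ (-r) := by
  have hderiv : ∀ᶠ t in atTop, HasDerivAt (fun τ => τ ^ s * W τ - C / (s - r) * τ ^ (s - r))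
      (t ^ s * (D t - (C * t ^ (-r) / t - s / t * W t))) t := by
    filter_upwards [hW, eventually_gt_atTop 0] with t hWt ht
    have hpow (p : ℝ) := Real.hasDerivAt_rpow_const (p := p) (Or.inl ht.ne')
    refine (((hpow s).mul hWt).sub ((hpow (s - r)).const_mul (C / (s - r)))).congr_deriv ?_
    have hsr : s - r ≠ 0 := (sub_pos.2 hrs).ne'
    rw [Real.rpow_sub_one ht.ne', Real.rpow_sub_one ht.ne', sub_eq_add_neg s r,
      Real.rpow_add ht, ← sub_eq_add_neg]
    field_simp
    ring
  obtain ⟨M, hM⟩ := isBoundedUnder_le_of_eventually_hasDerivAt_nonpos hderiv <| by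
    filter_upwards [hD, eventually_gt_atTop 0] with t hDt ht
    exact mul_nonpos_of_nonneg_of_nonpos (by positivity) (sub_nonpos.2 hDt)
  refine isBigO_rpow_neg_of_rpow_mul_le (M := |M| + C / (s - r)) hW₀ ?_
  filter_upwards [eventually_map.1 hM, eventually_ge_atTop 1] with t hMt ht
  have ht₀ : 0 < t := one_pos.trans_le ht
  have hone : 1 ≤ t ^ (s - r) := Real.one_le_rpow ht (sub_pos.2 hrs).le
  refine le_of_mul_le_mul_left ?_ (one_pos.trans_le hone)
  calc t ^ (s - r) * (t ^ r * W t) = t ^ s * W t := by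
        rw [← mul_assoc, ← Real.rpow_add ht₀, sub_add_cancel]
    _ ≤ M + C / (s - r) * t ^ (s - r) := by linarith
    _ ≤ t ^ (s - r) * (|M| + C / (s - r)) := by
        linarith [le_abs_self M, mul_le_mul_of_nonneg_right hone (abs_nonneg M)]

end ScalarComparison

lemma exists_tendsto_of_hasDerivAt_isBigO_rpow_neg {E : Type*} [NormedAddCommGroup E]
    [NormedSpace ℝ E] [CompleteSpace E] {x v : ℝ → E} {s : ℝ} (hs : 1 < s)
    (hx : ∀ᶠ t in atTop, HasDerivAt x (v t) t) (hv : v =O[atTop] fun t => t ^ (-s)) :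
    ∃ l, Tendsto x atTop (𝓝 l) := by
  have hderiv : deriv x =ᶠ[atTop] v := hx.mono fun t ht => ht.deriv
  have hint : MeasureTheory.IntegrableAtFilter (deriv x) atTop :=
    (hderiv.trans_isBigO hv).integrableAtFilter
      ⟨Set.univ, univ_mem, (aestronglyMeasurable_deriv x _)⟩
      (integrableAtFilter_rpow_atTop_iff.2 (neg_lt_neg hs))
  obtain ⟨S, hS, hintS⟩ := hint
  obtain ⟨T, hT⟩ := eventually_atTop.1 (hx.and hS)
  refine ⟨_, MeasureTheory.tendsto_limUnder_of_hasDerivAt_of_integrableOn_Ioi (a := T)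
    (fun t ht => (hT t ht.le).1.differentiableAt.hasDerivAt) ?_⟩
  exact hintS.mono_set fun t ht => (hT t (Set.mem_Ioi.1 ht).le).2

section MetricProjection

variable {H : Type*} [NormedAddCommGroup H] [InnerProductSpace ℝ H] {K : Set H} {z p : H}

/-- `p` is the metric projection of `z` onto the convex set `K`, encoded by the obtuse angle
criterion. -/
structure IsMetricProj (K : Set H) (z p : H) : Prop where
  mem : p ∈ K
  inner_nonpos : ∀ w ∈ K, ⟪z - p, w - p⟫_ℝ ≤ 0

lemma exists_isMetricProj (hne : K.Nonempty) (hcomplete : IsComplete K) (hconvex : Convex ℝ K)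
    (z : H) : ∃ p, IsMetricProj K z p := by
  obtain ⟨p, hp, hmin⟩ := exists_norm_eq_iInf_of_complete_convex hne hcomplete hconvex z
  exact ⟨p, hp, (norm_eq_iInf_iff_real_inner_le_zero hconvex hp).1 hmin⟩

namespace IsMetricProj

lemma norm_sub_eq_infDist (hp : IsMetricProj K z p) : ‖z - p‖ = infDist z K := by
  rw [← dist_eq_norm]
  refine le_antisymm ((le_infDist ⟨p, hp.mem⟩).2 fun w hw => ?_) (infDist_le_dist_of_mem hp.mem)
  have hexpand := norm_sub_sq_real (z - p) (w - p)
  rw [sub_sub_sub_cancel_right] at hexpand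
  rw [dist_eq_norm, dist_eq_norm]
  refine (sq_le_sq₀ (norm_nonneg _) (norm_nonneg _)).1 ?_
  linarith [hp.inner_nonpos w hw, sq_nonneg ‖w - p‖]

lemma lineMap (hp : IsMetricProj K z p) {c : ℝ} (hc : 0 ≤ c) :
    IsMetricProj K (AffineMap.lineMap p z c) p where
  mem := hp.mem
  inner_nonpos w hw := by
    rw [AffineMap.lineMap_apply, vsub_eq_sub, vadd_eq_add, add_sub_cancel_right, inner_smul_left,
      RCLike.conj_to_real]
    exact mul_nonpos_of_nonneg_of_nonpos hc (hp.inner_nonpos w hw)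

lemma inner_sub_le_infDist_mul_infDist {x q : H} (hp : IsMetricProj K z p)
    (hq : IsMetricProj K x q) : ⟪z - p, x - p⟫_ℝ ≤ infDist z K * infDist x K := by
  calc ⟪z - p, x - p⟫_ℝ = ⟪z - p, x - q⟫_ℝ + ⟪z - p, q - p⟫_ℝ := by
        rw [← inner_add_right, sub_add_sub_cancel]
    _ ≤ ‖z - p‖ * ‖x - q‖ + 0 := add_le_add (real_inner_le_norm _ _) (hp.inner_nonpos q hq.mem)
    _ = infDist z K * infDist x K := by
        rw [add_zero, hp.norm_sub_eq_infDist, hq.norm_sub_eq_infDist]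

lemma abs_half_sq_infDist_sub_le {z' p' : H} (hp : IsMetricProj K z p)
    (hp' : IsMetricProj K z' p') :
    |infDist z' K ^ 2 / 2 - infDist z K ^ 2 / 2 - ⟪z - p, z' - z⟫_ℝ| ≤ ‖z' - z‖ ^ 2 / 2 := by
  have hupper : infDist z' K ^ 2 ≤ ‖z' - p‖ ^ 2 := by
    rw [← dist_eq_norm]
    gcongr
    exacts [infDist_nonneg, infDist_le_dist_of_mem hp.mem]
  have hupper_expand : ‖z' - p‖ ^ 2 = ‖z - p‖ ^ 2 + 2 * ⟪z - p, z' - z⟫_ℝ + ‖z' - z‖ ^ 2 := by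
    rw [← norm_add_sq_real]; congr 2; abel
  have hlower_expand : ‖z' - p'‖ ^ 2 = ‖z - p‖ ^ 2
      + 2 * (⟪z - p, z' - z⟫_ℝ - ⟪z - p, p' - p⟫_ℝ) + ‖(z' - p') - (z - p)‖ ^ 2 := by
    rw [← inner_sub_right, show z' - z - (p' - p) = (z' - p') - (z - p) by abel,
      ← norm_add_sq_real]
    congr 2; abel
  rw [← hp'.norm_sub_eq_infDist] at hupper ⊢
  rw [← hp.norm_sub_eq_infDist, abs_le]
  constructor <;>
    linarith [hp.inner_nonpos p' hp'.mem, sq_nonneg ‖(z' - p') - (z - p)‖, sq_nonneg ‖z' - z‖]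

lemma hasGradientAt_half_sq_infDist [CompleteSpace H] (hK : ∀ z, ∃ p, IsMetricProj K z p)
    (hp : IsMetricProj K z p) : HasGradientAt (fun y => infDist y K ^ 2 / 2) (z - p) z := by
  rw [hasGradientAt_iff_isLittleO]
  refine (IsBigO.of_bound (1 / 2) (Eventually.of_forall fun z' => ?_)).trans_isLittleO
    (isLittleO_pow_sub_sub z one_lt_two)
  obtain ⟨p', hp'⟩ := hK z'
  rw [Real.norm_eq_abs, Real.norm_of_nonneg (by positivity)]
  linarith [hp.abs_half_sq_infDist_sub_le hp']

end IsMetricProj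

end MetricProjection

section ConvexGradient

variable {H : Type*} [NormedAddCommGroup H] [InnerProductSpace ℝ H]

lemma hasDerivAt_comp_of_hasGradientAt [CompleteSpace H] {F : H → ℝ} {g v : H} {x : ℝ → H} {t : ℝ}
    (hF : HasGradientAt F g (x t)) (hx : HasDerivAt x v t) :
    HasDerivAt (fun s => F (x s)) ⟪g, v⟫_ℝ t :=
  (hF.hasFDerivAt.comp_hasDerivAt t hx).congr_deriv
    InnerProductSpace.toDual_apply_apply

lemma sub_le_inner_gradient_of_convexOn [CompleteSpace H] {s : Set H} {F : H → ℝ} {g x z : H}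
    (hconv : ConvexOn ℝ s F) (hx : x ∈ s) (hz : z ∈ s) (hF : HasGradientAt F g x) :
    F x - F z ≤ ⟪g, x - z⟫_ℝ := by
  have hline := hconv.comp_affineMap (AffineMap.lineMap x z)
  have hderiv : HasDerivAt (F ∘ AffineMap.lineMap x z) ⟪g, z - x⟫_ℝ (0 : ℝ) :=
    hasDerivAt_comp_of_hasGradientAt (by simpa using hF) AffineMap.hasDerivAt_lineMap
  have hslope := hline.le_slope_of_hasDerivAt (x := 0) (y := 1) (by simpa using hx)
    (by simpa using hz) one_pos hderiv
  rw [slope_def_field] at hslope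
  simp only [Function.comp_apply, AffineMap.lineMap_apply_zero, AffineMap.lineMap_apply_one,
    sub_zero, div_one] at hslope
  rw [← neg_sub z x, inner_neg_right]
  linarith

lemma infDist_le_of_lt_of_quadratic_growth {F : H → ℝ} {K : Set H} {z p : H} {m μ ε : ℝ}
    (hconv : ConvexOn ℝ Set.univ F) (hp : IsMetricProj K z p) (hm : F p ≤ m) (hμ : 0 ≤ μ)
    (hε : 0 < ε) (hgrowth : ∀ y, infDist y K ≤ ε → μ / 2 * infDist y K ^ 2 ≤ F y - m)
    (hz : F z - m < μ / 2 * ε ^ 2) : infDist z K ≤ ε := by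
  by_contra! hfar
  have hd : 0 < infDist z K := hε.trans hfar
  set c := ε / infDist z K with hc
  have hc₀ : 0 < c := by positivity
  have hc₁ : c ≤ 1 := (div_le_one hd).2 hfar.le
  have hdist : infDist (AffineMap.lineMap p z c) K = ε := by
    rw [← (hp.lineMap hc₀.le).norm_sub_eq_infDist, ← dist_eq_norm, dist_lineMap_left,
      Real.norm_of_nonneg hc₀.le, dist_comm, dist_eq_norm, hp.norm_sub_eq_infDist, hc,
      div_mul_cancel₀ _ hd.ne']
  have hlower : μ / 2 * ε ^ 2 ≤ F (AffineMap.lineMap p z c) - m := by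
    simpa only [hdist] using hgrowth _ hdist.le
  have hupper : F (AffineMap.lineMap p z c) ≤ (1 - c) * F p + c * F z := by
    rw [AffineMap.lineMap_apply_module]
    exact hconv.2 (Set.mem_univ p) (Set.mem_univ z) (sub_nonneg.2 hc₁) hc₀.le (sub_add_cancel 1 c)
  refine lt_irrefl (μ / 2 * ε ^ 2) ?_
  calc μ / 2 * ε ^ 2 ≤ (1 - c) * (F p - m) + c * (F z - m) := by linarith
    _ ≤ c * (F z - m) :=
        add_le_of_nonpos_left
          (mul_nonpos_of_nonneg_of_nonpos (sub_nonneg.2 hc₁) (sub_nonpos.2 hm))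
    _ < c * (μ / 2 * ε ^ 2) := mul_lt_mul_of_pos_left hz hc₀
    _ ≤ μ / 2 * ε ^ 2 := mul_le_of_le_one_left (by positivity) hc₁

lemma eventually_quadratic_growth_of_tendsto {ι : Type*} {l : Filter ι} {y : ι → H} {F : H → ℝ}
    {K : Set H} {m μ ε : ℝ} (hconv : ConvexOn ℝ Set.univ F) (hK : ∀ z, ∃ p, IsMetricProj K z p)
    (hFK : ∀ p ∈ K, F p ≤ m) (hμ : 0 < μ) (hε : 0 < ε)
    (hgrowth : ∀ z, infDist z K ≤ ε → μ / 2 * infDist z K ^ 2 ≤ F z - m)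
    (hy : Tendsto (fun i => F (y i)) l (𝓝 m)) :
    ∀ᶠ i in l, μ / 2 * infDist (y i) K ^ 2 ≤ F (y i) - m := by
  have hsmall : ∀ᶠ i in l, F (y i) < m + μ / 2 * ε ^ 2 :=
    hy.eventually_lt_const (lt_add_of_pos_right _ (by positivity))
  filter_upwards [hsmall] with i hi
  obtain ⟨p, hp⟩ := hK (y i)
  exact hgrowth _ (infDist_le_of_lt_of_quadratic_growth hconv hp (hFK p hp.mem) hμ.le hε hgrowth
    (sub_lt_iff_lt_add'.2 hi))

end ConvexGradient

section Trajectory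

variable {H : Type*} [NormedAddCommGroup H] [InnerProductSpace ℝ H]

/-- For all large `t`, `x` is a twice differentiable solution, with velocity `v`, of the
asymptotically vanishing damping system `ẍ + (α / t) ẋ + G x = 0`. -/
structure IsAVDTrajectory (α : ℝ) (G : H → H) (x v : ℝ → H) : Prop where
  hasDerivAt_position : ∀ᶠ t in atTop, HasDerivAt x (v t) t
  hasDerivAt_velocity : ∀ᶠ t in atTop, HasDerivAt v (-((α / t) • v t) - G (x t)) t

/-- Lyapunov energy of a trajectory `x` with velocity `v`, for the value gap `F - m` and the target
set `K`. The usual anchored term `‖b (x - z) + t v‖² / 2` is minimized over `z ∈ K`, so the distance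
is taken from the extrapolated point `x + (t / b) v`. -/
noncomputable def avdEnergy (F : H → ℝ) (m : ℝ) (K : Set H) (b : ℝ) (x v : ℝ → H) (t : ℝ) : ℝ :=
  t ^ 2 * (F (x t) - m) + b ^ 2 * (infDist (x t + (t / b) • v t) K ^ 2 / 2)

lemma isAVDTrajectory_of_forall_ge {α t₀ : ℝ} {G : H → H} {x v a : ℝ → H}
    (hx : ∀ t, t₀ ≤ t → HasDerivAt x (v t) t) (hv : ∀ t, t₀ ≤ t → HasDerivAt v (a t) t)
    (hode : ∀ t, t₀ ≤ t → a t + (α / t) • v t + G (x t) = 0) : IsAVDTrajectory α G x v where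
  hasDerivAt_position := (eventually_ge_atTop t₀).mono hx
  hasDerivAt_velocity := (eventually_ge_atTop t₀).mono fun t ht =>
    (hv t ht).congr_deriv (by rw [← sub_eq_zero, ← hode t ht]; abel)

variable {F : H → ℝ} {F' : H → H} {K : Set H} {m α b t μ : ℝ} {x v : ℝ → H}

lemma sq_mul_gap_le_avdEnergy : t ^ 2 * (F (x t) - m) ≤ avdEnergy F m K b x v t :=
  le_add_of_nonneg_right (by positivity)

lemma avdEnergy_nonneg (hm : ∀ z, m ≤ F z) : 0 ≤ avdEnergy F m K b x v t :=
  (mul_nonneg (sq_nonneg t) (sub_nonneg.2 (hm _))).trans sq_mul_gap_le_avdEnergy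

lemma infDist_mul_infDist_le_avdEnergy (hμ : 0 ≤ μ)
    (hgrowth : μ / 2 * infDist (x t) K ^ 2 ≤ F (x t) - m) :
    b * (infDist (x t + (t / b) • v t) K * infDist (x t) K) * (t * √μ)
      ≤ avdEnergy F m K b x v t := by
  have hamgm := two_mul_le_add_sq (b * infDist (x t + (t / b) • v t) K) (t * √μ * infDist (x t) K)
  have hgap := mul_le_mul_of_nonneg_left hgrowth (sq_nonneg t)
  have hsq : (t * √μ * infDist (x t) K) ^ 2 = 2 * (t ^ 2 * (μ / 2 * infDist (x t) K ^ 2)) := by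
    rw [mul_pow, mul_pow, Real.sq_sqrt hμ]; ring
  unfold avdEnergy
  linarith

/-- This is where `b = 2 α / 3` comes from: it equalizes the decay rates `b - 2` of the value gap
and `2 (α - 1 - b)` of the distance term. -/
lemma avdEnergy_deriv_le {p : H} (hα : 3 ≤ α) (hb : b = 2 * α / 3) (hμ : 0 < μ) (ht : 0 < t)
    (hK : ∀ z, ∃ p, IsMetricProj K z p) (hp : IsMetricProj K (x t + (t / b) • v t) p)
    (hsub : F (x t) - m ≤ ⟪F' (x t), x t - p⟫_ℝ)
    (hgrowth : μ / 2 * infDist (x t) K ^ 2 ≤ F (x t) - m) :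
    t * (2 * (F (x t) - m) - b * ⟪F' (x t), x t - p⟫_ℝ)
        - b * (α - 1 - b) * ⟪x t + (t / b) • v t - p, v t⟫_ℝ
      ≤ (b * (α / 3 - 1) / √μ / t ^ 2 - (b - 2) / t) * avdEnergy F m K b x v t := by
  obtain ⟨q, hq⟩ := hK (x t)
  set u := x t + (t / b) • v t with hu
  have hb₀ : 0 < b := by linarith
  have hκ : α - 1 - b = α / 3 - 1 := by linarith
  have hκ₀ : 0 ≤ α / 3 - 1 := by linarith
  have hvel : v t = (b / t) • ((u - p) - (x t - p)) := by
    rw [hu]; match_scalars <;> field_simp <;> ring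
  have hinner : ⟪u - p, v t⟫_ℝ = b / t * (infDist u K ^ 2 - ⟪u - p, x t - p⟫_ℝ) := by
    rw [hvel, inner_smul_right, inner_sub_right, real_inner_self_eq_norm_sq,
      hp.norm_sub_eq_infDist]
  have hcross : b * (α / 3 - 1) * (b / t * ⟪u - p, x t - p⟫_ℝ)
      ≤ b * (α / 3 - 1) / √μ / t ^ 2 * avdEnergy F m K b x v t := by
    calc b * (α / 3 - 1) * (b / t * ⟪u - p, x t - p⟫_ℝ)
        ≤ b * (α / 3 - 1) * (b / t * (infDist u K * infDist (x t) K)) := by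
          gcongr; exact hp.inner_sub_le_infDist_mul_infDist hq
      _ = b * (α / 3 - 1) / √μ / t ^ 2
            * (b * (infDist u K * infDist (x t) K) * (t * √μ)) := by field_simp
      _ ≤ _ := by gcongr; exact infDist_mul_infDist_le_avdEnergy hμ.le hgrowth
  have hgap : t * (2 * (F (x t) - m) - b * ⟪F' (x t), x t - p⟫_ℝ)
      ≤ -(b - 2) * t * (F (x t) - m) := by
    nlinarith [mul_le_mul_of_nonneg_left hsub (mul_pos ht hb₀).le]
  calc _ ≤ -(b - 2) * t * (F (x t) - m) - b * (α / 3 - 1) * (b / t * infDist u K ^ 2)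
          + b * (α / 3 - 1) * (b / t * ⟪u - p, x t - p⟫_ℝ) := by
        rw [hκ, hinner]; linarith
    _ = -((b - 2) / t) * avdEnergy F m K b x v t
          + b * (α / 3 - 1) * (b / t * ⟪u - p, x t - p⟫_ℝ) := by
        rw [avdEnergy, ← hu, hb]; field_simp; ring
    _ ≤ _ := by linarith

lemma isBigO_gap_of_isBigO_avdEnergy {r : ℝ} (hm : ∀ z, m ≤ F z)
    (henergy : avdEnergy F m K b x v =O[atTop] fun t => t ^ (-(r - 2))) :
    (fun t => F (x t) - m) =O[atTop] fun t => t ^ (-r) := by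
  have hgap : (fun t => F (x t) - m) =O[atTop] fun t => avdEnergy F m K b x v t * t ^ (-2 : ℝ) := by
    refine IsBigO.of_bound 1 ?_
    filter_upwards [eventually_gt_atTop 0] with t ht
    rw [one_mul, Real.norm_of_nonneg (sub_nonneg.2 (hm _)),
      Real.norm_of_nonneg (mul_nonneg (avdEnergy_nonneg hm) (Real.rpow_nonneg ht.le _)),
      Real.rpow_neg ht.le, Real.rpow_two, ← div_eq_mul_inv, le_div_iff₀ (by positivity), mul_comm]
    exact sq_mul_gap_le_avdEnergy
  refine (hgap.trans (henergy.mul (isBigO_refl _ _))).congr' EventuallyEq.rfl ?_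
  filter_upwards [eventually_gt_atTop 0] with t ht
  rw [← Real.rpow_add ht]
  ring_nf

variable [CompleteSpace H]

lemma hasDerivAt_avdEnergy {p : H} (hgrad : HasGradientAt F (F' (x t)) (x t))
    (hK : ∀ z, ∃ p, IsMetricProj K z p) (ht : t ≠ 0) (hb : b ≠ 0)
    (hx : HasDerivAt x (v t) t) (hv : HasDerivAt v (-((α / t) • v t) - F' (x t)) t)
    (hp : IsMetricProj K (x t + (t / b) • v t) p) :
    HasDerivAt (avdEnergy F m K b x v)
      (t * (2 * (F (x t) - m) - b * ⟪F' (x t), x t - p⟫_ℝ)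
        - b * (α - 1 - b) * ⟪x t + (t / b) • v t - p, v t⟫_ℝ) t := by
  have hgap : HasDerivAt (fun s => s ^ 2 * (F (x s) - m))
      (2 * t * (F (x t) - m) + t ^ 2 * ⟪F' (x t), v t⟫_ℝ) t := by
    simpa using (hasDerivAt_pow 2 t).fun_mul
      ((hasDerivAt_comp_of_hasGradientAt hgrad hx).sub_const m)
  have hextrapolated : HasDerivAt (fun s => x s + (s / b) • v s)
      (-(((α - 1 - b) / b) • v t) - (t / b) • F' (x t)) t := by
    refine (hx.add (((hasDerivAt_id t).div_const b).smul hv)).congr_deriv ?_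
    simp only [id_eq]
    match_scalars <;> field_simp
    ring
  have hdist := (hasDerivAt_comp_of_hasGradientAt
    (hp.hasGradientAt_half_sq_infDist hK) hextrapolated).const_mul (b ^ 2)
  refine (hgap.add hdist).congr_deriv ?_
  have hinner : ⟪x t + (t / b) • v t - p, F' (x t)⟫_ℝ
      = ⟪F' (x t), x t - p⟫_ℝ + t / b * ⟪F' (x t), v t⟫_ℝ := by
    rw [real_inner_comm, add_sub_right_comm, inner_add_right, inner_smul_right]
  rw [inner_sub_right, inner_neg_right, inner_smul_right, inner_smul_right, hinner]
  field_simp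
  ring

lemma tendsto_value_of_isAVDTrajectory (hα : 3 ≤ α) (hconv : ConvexOn ℝ Set.univ F)
    (hgrad : ∀ z, HasGradientAt F (F' z) z) (hm : ∀ z, m ≤ F z) {p : H} (hp : F p = m)
    (hxv : IsAVDTrajectory α F' x v) : Tendsto (fun t => F (x t)) atTop (𝓝 m) := by
  have hproj (z : H) : IsMetricProj {p} z p := ⟨rfl, by rintro w rfl; simp⟩
  obtain ⟨M, hM⟩ := isBoundedUnder_le_of_eventually_hasDerivAt_nonpos
    (f := avdEnergy F m {p} (α - 1) x v)
    (f' := fun t => t * (2 * (F (x t) - m) - (α - 1) * ⟪F' (x t), x t - p⟫_ℝ))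
    (by
      filter_upwards [hxv.hasDerivAt_position, hxv.hasDerivAt_velocity, eventually_ne_atTop 0]
        with t hx hv ht
      refine (hasDerivAt_avdEnergy (hgrad _) (fun z => ⟨p, hproj z⟩) ht (by linarith) hx hv
        (hproj _)).congr_deriv ?_
      rw [sub_self, mul_zero, zero_mul, sub_zero])
    (by
      filter_upwards [eventually_ge_atTop 0] with t ht
      have hsub := sub_le_inner_gradient_of_convexOn hconv trivial trivial (hgrad (x t)) (z := p)
      refine mul_nonpos_of_nonneg_of_nonpos ht ?_
      nlinarith [hm (x t)])
  have hupper : ∀ᶠ t in atTop, F (x t) ≤ m + M / t ^ 2 := by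
    filter_upwards [eventually_map.1 hM, eventually_gt_atTop 0] with t hMt ht
    rw [← sub_le_iff_le_add', le_div_iff₀ (by positivity), mul_comm]
    exact sq_mul_gap_le_avdEnergy.trans hMt
  refine tendsto_of_tendsto_of_tendsto_of_le_of_le' tendsto_const_nhds ?_
    (Eventually.of_forall fun t => hm (x t)) hupper
  simpa using tendsto_const_nhds.add
    (tendsto_const_nhds.div_atTop (tendsto_pow_atTop (α := ℝ) two_ne_zero))

lemma isBigO_gap_of_isAVDTrajectory (hα : 3 ≤ α) (hμ : 0 < μ) (hconv : ConvexOn ℝ Set.univ F)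
    (hgrad : ∀ z, HasGradientAt F (F' z) z) (hm : ∀ z, m ≤ F z)
    (hK : ∀ z, ∃ p, IsMetricProj K z p) (hFK : ∀ p ∈ K, F p = m)
    (hxv : IsAVDTrajectory α F' x v)
    (hgrowth : ∀ᶠ t in atTop, μ / 2 * infDist (x t) K ^ 2 ≤ F (x t) - m) :
    (fun t => F (x t) - m) =O[atTop] fun t => t ^ (-(2 * α / 3)) := by
  choose P hP using hK
  have hK (z : H) : ∃ p, IsMetricProj K z p := ⟨P z, hP z⟩
  set b := 2 * α / 3 with hb
  refine isBigO_gap_of_isBigO_avdEnergy (K := K) (b := b) (v := v) hm <|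
    isBigO_rpow_neg_of_hasDerivAt_le_mul (C := b * (α / 3 - 1) / √μ)
      (D := fun t => t * (2 * (F (x t) - m) - b * ⟪F' (x t), x t - P (x t + (t / b) • v t)⟫_ℝ)
        - b * (α - 1 - b) * ⟪x t + (t / b) • v t - P (x t + (t / b) • v t), v t⟫_ℝ)
      (Eventually.of_forall fun t => avdEnergy_nonneg hm) ?_ ?_
  · filter_upwards [hxv.hasDerivAt_position, hxv.hasDerivAt_velocity, eventually_ne_atTop 0]
      with t hx hv ht
    exact hasDerivAt_avdEnergy (hgrad _) hK ht (by linarith) hx hv (hP _)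
  · filter_upwards [hgrowth, eventually_gt_atTop 0] with t hgrowth_t ht
    refine avdEnergy_deriv_le hα hb hμ ht hK (hP _) ?_ hgrowth_t
    rw [← hFK _ (hP (x t + (t / b) • v t)).mem]
    exact sub_le_inner_gradient_of_convexOn hconv trivial trivial (hgrad _)

lemma isBigO_sq_norm_velocity_of_isAVDTrajectory {r : ℝ} (hr : r < 2 * α)
    (hgrad : ∀ z, HasGradientAt F (F' z) z) (hm : ∀ z, m ≤ F z)
    (hxv : IsAVDTrajectory α F' x v)
    (hgap : (fun t => F (x t) - m) =O[atTop] fun t => t ^ (-r)) :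
    (fun t => ‖v t‖ ^ 2) =O[atTop] fun t => t ^ (-r) := by
  -- The mechanical energy `W` satisfies `W' = -(α / t) ‖v‖² = -(2 α / t) (W - (F - m))`.
  have hmechanical : (fun t => (F (x t) - m) + ‖v t‖ ^ 2 / 2) =O[atTop] fun t => t ^ (-r) := by
    obtain ⟨C, hC⟩ := hgap.bound
    refine isBigO_rpow_neg_of_hasDerivAt_le_add (s := 2 * α) (C := 2 * |α| * C)
      (D := fun t => -(α / t * ‖v t‖ ^ 2)) hr
      (Eventually.of_forall fun t => add_nonneg (sub_nonneg.2 (hm _)) (by positivity)) ?_ ?_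
    · filter_upwards [hxv.hasDerivAt_position, hxv.hasDerivAt_velocity] with t hx hv
      refine (((hasDerivAt_comp_of_hasGradientAt (hgrad _) hx).sub_const m).add
        (hv.norm_sq.div_const 2)).congr_deriv ?_
      rw [inner_sub_right, inner_neg_right, inner_smul_right, real_inner_self_eq_norm_sq,
        real_inner_comm (F' (x t))]
      ring
    · filter_upwards [hC, eventually_gt_atTop 0] with t hCt ht
      rw [Real.norm_of_nonneg (Real.rpow_nonneg ht.le _)] at hCt
      have hforcing : α * (F (x t) - m) ≤ |α| * (C * t ^ (-r)) :=
        (le_abs_self _).trans <| by rw [abs_mul]; exact mul_le_mul_of_nonneg_left hCt (abs_nonneg _)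
      have hforcing_div := div_le_div_of_nonneg_right hforcing ht.le
      linear_combination 2 * hforcing_div
  refine IsBigO.trans (IsBigO.of_bound 2 (Eventually.of_forall fun t => ?_)) hmechanical
  have hgap_nonneg : 0 ≤ F (x t) - m := sub_nonneg.2 (hm _)
  rw [Real.norm_of_nonneg (by positivity), Real.norm_of_nonneg (by positivity)]
  linarith

lemma isBigO_velocity_of_isAVDTrajectory {r : ℝ} (hr : r < α)
    (hgrad : ∀ z, HasGradientAt F (F' z) z) (hm : ∀ z, m ≤ F z)
    (hxv : IsAVDTrajectory α F' x v)
    (hgap : (fun t => F (x t) - m) =O[atTop] fun t => t ^ (-(2 * r))) :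
    v =O[atTop] fun t => t ^ (-r) := by
  have hsq := isBigO_sq_norm_velocity_of_isAVDTrajectory (by linarith) hgrad hm hxv hgap
  refine IsBigO.of_norm_left (IsBigO.of_pow two_ne_zero (hsq.congr' EventuallyEq.rfl ?_))
  filter_upwards [eventually_ge_atTop 0] with t ht
  rw [Pi.pow_apply, ← Real.rpow_natCast, ← Real.rpow_mul ht]
  ring_nf

end Trajectory

theorem avd_quadratic_growth_convergence_general
    {H : Type*} [NormedAddCommGroup H] [InnerProductSpace ℝ H] [CompleteSpace H]
    (F : H → ℝ) (F' : H → H) (hconv : ConvexOn ℝ Set.univ F)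
    (hgrad : ∀ z : H, HasGradientAt F (F' z) z)
    (Xstar : Set H) (hXstar : Xstar = {z : H | ∀ w : H, F z ≤ F w}) (hXne : Xstar.Nonempty)
    (Fstar : ℝ) (hFstar : ∀ z ∈ Xstar, F z = Fstar)
    {α : ℝ} (hα : 3 < α) {x v : ℝ → H} (hxv : IsAVDTrajectory α F' x v)
    {μ ε : ℝ} (hμ : 0 < μ) (hε : 0 < ε)
    (hgrowth : ∀ z : H, infDist z Xstar ≤ ε → μ / 2 * infDist z Xstar ^ 2 ≤ F z - Fstar) :
    ((fun t : ℝ => F (x t) - Fstar) =O[atTop] fun t : ℝ => t ^ (-(2 * α) / 3)) ∧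
      ((fun t : ℝ => ‖v t‖) =O[atTop] fun t : ℝ => t ^ (-α / 3)) ∧
      ∃ xlim ∈ Xstar, Tendsto x atTop (𝓝 xlim) := by
  have hFcont : Continuous F := continuous_iff_continuousAt.2 fun z => (hgrad z).continuousAt
  obtain ⟨z₀, hz₀⟩ := hXne
  have hmin : ∀ z, Fstar ≤ F z := by
    rw [← hFstar z₀ hz₀]; rw [hXstar] at hz₀; exact hz₀
  have hsublevel : Xstar = {z | F z ≤ Fstar} := by
    refine Set.Subset.antisymm (fun z hz => (hFstar z hz).le) fun z hz => ?_
    rw [hXstar]; exact fun w => le_trans hz (hmin w)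
  have hproj := exists_isMetricProj (K := Xstar) ⟨z₀, hz₀⟩
    (by rw [hsublevel]; exact (isClosed_le hFcont continuous_const).isComplete)
    (by rw [hsublevel]; simpa using hconv.convex_le Fstar)
  have hvalue := tendsto_value_of_isAVDTrajectory hα.le hconv hgrad hmin (hFstar z₀ hz₀) hxv
  have hgap := isBigO_gap_of_isAVDTrajectory hα.le hμ hconv hgrad hmin hproj hFstar hxv <|
    eventually_quadratic_growth_of_tendsto hconv hproj (fun p hp => (hFstar p hp).le) hμ hε hgrowth
      hvalue
  have hvel : v =O[atTop] fun t => t ^ (-(α / 3)) :=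
    isBigO_velocity_of_isAVDTrajectory (by linarith) hgrad hmin hxv (by rwa [← mul_div_assoc])
  obtain ⟨l, hl⟩ := exists_tendsto_of_hasDerivAt_isBigO_rpow_neg (by linarith)
    hxv.hasDerivAt_position hvel
  refine ⟨by rwa [neg_div], by rw [neg_div]; exact hvel.norm_left, l, ?_, hl⟩
  rw [hsublevel]
  exact (tendsto_nhds_unique ((hFcont.tendsto l).comp hl) hvalue).le

/-- Trajectories of the AVD system `ẍ + (α/t) ẋ + ∇F(x) = 0` for a convex, coercive,
differentiable `F` with a second order regular set of minimizers, under a local quadratic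
growth condition `G²_{μ,loc}` and `α > 3`: if `μ` is small enough then
`F(x(t)) - F* = O(t^{-2α/3})`, `‖ẋ(t)‖ = O(t^{-α/3})`, and the trajectory converges
strongly to a minimizer of `F`. -/
theorem avd_quadratic_growth_convergence
    {H : Type*} [NormedAddCommGroup H] [InnerProductSpace ℝ H] [CompleteSpace H]
    (F : H → ℝ) (F' : H → H)
    (hconv : ConvexOn ℝ Set.univ F)
    (hgrad : ∀ z : H, HasGradientAt F (F' z) z)
    (hcoercive : Tendsto F (Bornology.cobounded H) atTop)
    (Xstar : Set H) (hXstar : Xstar = {z : H | ∀ w : H, F z ≤ F w})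
    (hXne : Xstar.Nonempty)
    (hreg : SecondOrderRegular Xstar)
    (Fstar : ℝ) (hFstar : ∀ z ∈ Xstar, F z = Fstar)
    -- a twice differentiable solution of (AVD) on `[t₀, ∞)`, with `t₀ ≥ 0` and `α > 3`
    (α t₀ : ℝ) (hα : 3 < α) (ht₀ : 0 ≤ t₀)
    (x v a : ℝ → H)
    (hx : ∀ t : ℝ, t₀ ≤ t → HasDerivAt x (v t) t)
    (hv : ∀ t : ℝ, t₀ ≤ t → HasDerivAt v (a t) t)
    (hode : ∀ t : ℝ, t₀ ≤ t → a t + (α / t) • v t + F' (x t) = 0) :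
    -- if `μ` is small enough (below a threshold `μ₀`) and the local quadratic growth
    -- condition `G²_{μ,loc}` holds, then the conclusions follow
    ∃ μ₀ : ℝ, 0 < μ₀ ∧
      ∀ μ ε : ℝ, 0 < μ → μ ≤ μ₀ → 0 < ε →
        (∀ z : H, infDist z Xstar ≤ ε → μ / 2 * infDist z Xstar ^ 2 ≤ F z - Fstar) →
        ((fun t : ℝ => F (x t) - Fstar) =O[atTop] fun t : ℝ => t ^ (-(2 * α) / 3)) ∧
        ((fun t : ℝ => ‖v t‖) =O[atTop] fun t : ℝ => t ^ (-α / 3)) ∧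
        ∃ xlim ∈ Xstar, Tendsto x atTop (𝓝 xlim) := by
  exact ⟨1, one_pos, fun μ ε hμ _ hε hgrowth =>
    avd_quadratic_growth_convergence_general F F' hconv hgrad Xstar hXstar hXne Fstar hFstar hα
      (isAVDTrajectory_of_forall_ge hx hv hode) hμ hε hgrowth⟩
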